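/- arXiv:math/0308145 — 3 statements merged into one kernel-verified Lean document; each statement's English description precedes it below -/
import Mathlib

section
/- Let 1 ≤ k ≤ n and let E_1, …, E_k be infinite-dimensional 𝓛_∞-spaces; set q_1 = ⋯ = q_k = 2 and q_{k+1} = ⋯ = q_n = 1. If F is a Banach space such that for every choice of Banach spaces E_{k+1}, …, E_n, every continuous n-linear map from E_1 × ⋯ × E_n into F is absolutely (1; q_1, …, q_n)-summing, then F is finite-dimensional. -/
open MeasureTheory

/-- Weak `ℓ_q` norm of a finite family in a normed space. -/
noncomputable def weakLpNorm (𝕜 : Type*) [RCLike 𝕜] {E : Type*} [NormedAddCommGroup E]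
    [NormedSpace 𝕜 E] (q : ℝ) {m : ℕ} (x : Fin m → E) : ℝ :=
  ⨆ φ : {φ : E →L[𝕜] 𝕜 // ‖φ‖ ≤ 1}, (∑ j, ‖φ.1 (x j)‖ ^ q) ^ (1 / q)

/-- `T` satisfies the `p`-semi-integral inequality with constant `C`, witnessed by a regular
Borel probability measure on the product of the closed dual unit balls with their
weak-star topologies. -/
def SemiIntegralWith (𝕜 : Type*) [RCLike 𝕜] {ι : Type*} [Fintype ι] {E : ι → Type*}
    [∀ i, NormedAddCommGroup (E i)] [∀ i, NormedSpace 𝕜 (E i)]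
    {F : Type*} [NormedAddCommGroup F]
    (p C : ℝ) (T : (∀ i, E i) → F) : Prop :=
  letI : MeasurableSpace (∀ i, {φ : WeakDual 𝕜 (E i) // ∀ z, ‖φ z‖ ≤ ‖z‖}) := borel _
  ∃ μ : Measure (∀ i, {φ : WeakDual 𝕜 (E i) // ∀ z, ‖φ z‖ ≤ ‖z‖}),
    IsProbabilityMeasure μ ∧ μ.Regular ∧
      ∀ x : ∀ i, E i,
        ‖T x‖ ≤ C * (∫ φ, ∏ i, ‖(φ i).1 (x i)‖ ^ p ∂μ) ^ (1 / p)

/-- The `si,p` norm: infimum of admissible constants. -/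
noncomputable def siNorm (𝕜 : Type*) [RCLike 𝕜] {ι : Type*} [Fintype ι] {E : ι → Type*}
    [∀ i, NormedAddCommGroup (E i)] [∀ i, NormedSpace 𝕜 (E i)]
    {F : Type*} [NormedAddCommGroup F]
    (p : ℝ) (T : (∀ i, E i) → F) : ℝ :=
  sInf {C : ℝ | 0 ≤ C ∧ SemiIntegralWith 𝕜 p C T}

/-- `T` is absolutely `(p; q₁,…,qₙ)`-summing with constant `C`. -/
def AbsSummingWith (𝕜 : Type*) [RCLike 𝕜] {ι : Type*} [Fintype ι] {E : ι → Type*}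
    [∀ i, NormedAddCommGroup (E i)] [∀ i, NormedSpace 𝕜 (E i)]
    {F : Type*} [NormedAddCommGroup F]
    (p : ℝ) (q : ι → ℝ) (C : ℝ) (T : (∀ i, E i) → F) : Prop :=
  ∀ (m : ℕ) (x : ∀ i, Fin m → E i),
    (∑ j, ‖T (fun i => x i j)‖ ^ p) ^ (1 / p) ≤ C * ∏ i, weakLpNorm 𝕜 (q i) (x i)

/-- `T` is `p`-dominated with constant `C`, witnessed by regular Borel probability measures
on the closed dual unit balls with their weak-star topologies. -/
def DominatedWith (𝕜 : Type*) [RCLike 𝕜] {ι : Type*} [Fintype ι] {E : ι → Type*}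
    [∀ i, NormedAddCommGroup (E i)] [∀ i, NormedSpace 𝕜 (E i)]
    {F : Type*} [NormedAddCommGroup F]
    (p C : ℝ) (T : (∀ i, E i) → F) : Prop :=
  letI : ∀ i, MeasurableSpace {φ : WeakDual 𝕜 (E i) // ∀ z, ‖φ z‖ ≤ ‖z‖} := fun i => borel _
  ∃ μ : ∀ i, Measure {φ : WeakDual 𝕜 (E i) // ∀ z, ‖φ z‖ ≤ ‖z‖},
    (∀ i, IsProbabilityMeasure (μ i)) ∧ (∀ i, (μ i).Regular) ∧
      ∀ x : ∀ i, E i,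
        ‖T x‖ ≤ C * ∏ i, (∫ φ, ‖φ.1 (x i)‖ ^ p ∂(μ i)) ^ (1 / p)

/-- `E` is an `𝓛_∞`-space. -/
def IsLinftySpace (𝕜 : Type*) [RCLike 𝕜] (E : Type*) [NormedAddCommGroup E]
    [NormedSpace 𝕜 E] : Prop :=
  ∃ lam : ℝ, 1 ≤ lam ∧ ∀ M : Submodule 𝕜 E, FiniteDimensional 𝕜 M →
    ∃ N : Submodule 𝕜 E, M ≤ N ∧ FiniteDimensional 𝕜 N ∧
      ∃ v : N ≃L[𝕜] (Fin (Module.finrank 𝕜 N) → 𝕜),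
        ‖(v : N →L[𝕜] (Fin (Module.finrank 𝕜 N) → 𝕜))‖ *
          ‖(v.symm : (Fin (Module.finrank 𝕜 N) → 𝕜) →L[𝕜] N)‖ ≤ lam

/-- `F` has cotype `q`. -/
def HasCotype (q : ℝ) (F : Type*) [NormedAddCommGroup F] : Prop :=
  ∃ C : ℝ, 0 ≤ C ∧ ∀ (m : ℕ) (x : Fin m → F),
    (∑ j, ‖x j‖ ^ q) ^ (1 / q) ≤
      C * ((∑ ε : Fin m → Bool, ‖∑ j, (if ε j then x j else -x j)‖ ^ (2 : ℝ)) / 2 ^ m)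
        ^ ((1 : ℝ) / 2)

universe u v

/-!
Suppose that `F` is infinite-dimensional. An operator `u` of maximal determinant in the unit ball
of `ℓ_2^n →L[𝕜] X`, for an `n`-dimensional `X ≤ F`, satisfies Lewis's inequality
`re (tr L) ≤ n * ‖u ∘ L‖`, by differentiating `det (1 + t • L) ≤ ‖u ∘ (1 + t • L)‖ ^ n` at `t = 0`.
Testing it on orthogonal projections, one finds orthonormal vectors `v₁, …, v_k` with
`‖u v_j‖ > 1 - k / n`. Letting `n` grow gives operators `ℓ_2^k → F` of norm at most one for which
the unit vectors have images of norm at least `1 / 2`, and hence operators `Y : ℓ_∞^k → F` with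
`‖Y‖ ≤ √k` and the same property.

An infinite-dimensional `𝓛_∞`-space `E i` contains uniformly complemented copies of `ℓ_∞^k`, whose
unit vector bases have uniformly bounded weak `ℓ_q` norms for `q ≥ 1`. Projecting each argument to
`ℓ_∞^k`, multiplying coordinatewise and applying `Y` yields a multilinear map of norm at most `√k`
taking the `j`-th unit vectors to `Y e_j`. The uniform boundedness principle makes the summing
constants of these maps at most `B * √k`, so that `k ^ (1 / r) / 2 ≤ B * √k` for all `k`, where
`r = max p 1`; this is impossible for `p < 2`.
-/

theorem sum_rpow_le_rpow_sum {ι : Type*} (s : Finset ι) {a : ι → ℝ} (ha : ∀ i, 0 ≤ a i) {t : ℝ}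
    (ht : 1 ≤ t) : ∑ i ∈ s, a i ^ t ≤ (∑ i ∈ s, a i) ^ t := by
  classical
  induction s using Finset.induction_on with
  | empty => simp [Real.zero_rpow (zero_lt_one.trans_le ht).ne']
  | insert i s hi ih =>
    rw [Finset.sum_insert hi, Finset.sum_insert hi]
    calc a i ^ t + ∑ j ∈ s, a j ^ t ≤ a i ^ t + (∑ j ∈ s, a j) ^ t := by gcongr
      _ ≤ (a i + ∑ j ∈ s, a j) ^ t :=
        Real.add_rpow_le_rpow_add (ha i) (Finset.sum_nonneg fun j _ => ha j) ht

theorem rpow_sum_rpow_le_of_le {ι : Type*} (s : Finset ι) {a : ι → ℝ}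
    (ha : ∀ i, 0 ≤ a i) {p q : ℝ} (hp : 0 < p) (hpq : p ≤ q) :
    (∑ i ∈ s, a i ^ q) ^ (1 / q) ≤ (∑ i ∈ s, a i ^ p) ^ (1 / p) := by
  have hq : 0 < q := hp.trans_le hpq
  have hap : ∀ i, 0 ≤ a i ^ p := fun i => Real.rpow_nonneg (ha i) p
  calc (∑ i ∈ s, a i ^ q) ^ (1 / q) = (∑ i ∈ s, (a i ^ p) ^ (q / p)) ^ (1 / q) := by
        simp only [← Real.rpow_mul (ha _), mul_div_cancel₀ q hp.ne']
    _ ≤ ((∑ i ∈ s, a i ^ p) ^ (q / p)) ^ (1 / q) := by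
        gcongr
        exacts [Finset.sum_nonneg fun i _ => Real.rpow_nonneg (hap i) _,
          sum_rpow_le_rpow_sum s hap ((one_le_div hp).2 hpq)]
    _ = (∑ i ∈ s, a i ^ p) ^ (1 / p) := by
        rw [← Real.rpow_mul (Finset.sum_nonneg fun i _ => hap i)]
        congr 1
        field_simp

theorem card_rpow_mul_le_rpow_sum {ι : Type*} (s : Finset ι) {a : ι → ℝ} {c p : ℝ} (hp : 0 < p)
    (hc : 0 ≤ c) (hca : ∀ i ∈ s, c ≤ a i) :
    (s.card : ℝ) ^ (1 / p) * c ≤ (∑ i ∈ s, a i ^ p) ^ (1 / p) := by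
  calc (s.card : ℝ) ^ (1 / p) * c = (∑ _i ∈ s, c ^ p) ^ (1 / p) := by
        rw [Finset.sum_const, nsmul_eq_mul, Real.mul_rpow (by positivity) (by positivity),
          one_div, Real.rpow_rpow_inv hc hp.ne']
    _ ≤ (∑ i ∈ s, a i ^ p) ^ (1 / p) := by
        gcongr with i hi
        exact hca i hi

theorem AbsSummingWith.of_exponent_le {𝕜 ι : Type*} [RCLike 𝕜] [Fintype ι] {E : ι → Type*}
    [∀ i, NormedAddCommGroup (E i)] [∀ i, NormedSpace 𝕜 (E i)] {F : Type*} [NormedAddCommGroup F]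
    {p r C : ℝ} {q : ι → ℝ} {T : (∀ i, E i) → F} (h : AbsSummingWith 𝕜 p q C T) (hp : 0 < p)
    (hpr : p ≤ r) : AbsSummingWith 𝕜 r q C T := fun m x =>
  (rpow_sum_rpow_le_of_le _ (fun _ => norm_nonneg _) hp hpr).trans (h m x)

theorem sum_norm_apply_single_le_norm {𝕜 ι : Type*} [RCLike 𝕜] [Fintype ι] [DecidableEq ι]
    (ψ : (ι → 𝕜) →L[𝕜] 𝕜) : ∑ i, ‖ψ (Pi.single i 1)‖ ≤ ‖ψ‖ := by
  choose c hc hcψ using fun i => RCLike.exists_norm_eq_mul_self (ψ (Pi.single i 1))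
  have hsum : ψ c = ((∑ i, ‖ψ (Pi.single i 1)‖ : ℝ) : 𝕜) := by
    rw [pi_eq_sum_univ' c, map_sum]
    push_cast
    simp only [hcψ, map_smul, smul_eq_mul]
  calc ∑ i, ‖ψ (Pi.single i 1)‖ = ‖ψ c‖ := by
        rw [hsum, RCLike.norm_of_nonneg (Finset.sum_nonneg fun _ _ => norm_nonneg _)]
    _ ≤ ‖ψ‖ := ψ.unit_le_opNorm c ((pi_norm_le_iff_of_nonneg zero_le_one).2 fun i => (hc i).le)

section WeakLpNorm

variable {𝕜 E : Type*} [RCLike 𝕜] [NormedAddCommGroup E] [NormedSpace 𝕜 E] {m : ℕ} {q : ℝ}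

theorem weakLpNorm_nonneg (x : Fin m → E) : 0 ≤ weakLpNorm 𝕜 q x :=
  Real.iSup_nonneg fun _ => by positivity

theorem weakLpNorm_apply_single_le_norm (hq : 1 ≤ q) (J : (Fin m → 𝕜) →L[𝕜] E) :
    weakLpNorm 𝕜 q (fun j => J (Pi.single j 1)) ≤ ‖J‖ := by
  have : Nonempty {φ : E →L[𝕜] 𝕜 // ‖φ‖ ≤ 1} := ⟨0, by simp⟩
  refine ciSup_le fun ⟨φ, hφ⟩ => ?_
  calc (∑ j, ‖φ (J (Pi.single j 1))‖ ^ q) ^ (1 / q)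
      ≤ (∑ j, ‖φ (J (Pi.single j 1))‖ ^ (1 : ℝ)) ^ (1 / 1 : ℝ) :=
        rpow_sum_rpow_le_of_le _ (fun _ => norm_nonneg _) one_pos hq
    _ = ∑ j, ‖(φ ∘L J) (Pi.single j 1)‖ := by simp
    _ ≤ ‖φ ∘L J‖ := sum_norm_apply_single_le_norm _
    _ ≤ ‖φ‖ * ‖J‖ := φ.opNorm_comp_le J
    _ ≤ ‖J‖ := mul_le_of_le_one_left (norm_nonneg J) hφ

end WeakLpNorm

theorem exists_bound_of_pointwise_bounded {𝕜 X κ : Type*} [NontriviallyNormedField 𝕜]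
    [NormedAddCommGroup X] [NormedSpace 𝕜 X] [CompleteSpace X] {G : κ → Type*}
    [∀ k, NormedAddCommGroup (G k)] [∀ k, NormedSpace 𝕜 (G k)] (A : ∀ k, X →L[𝕜] G k)
    (h : ∀ x, ∃ C, ∀ k, ‖A k x‖ ≤ C) : ∃ B, ∀ k x, ‖A k x‖ ≤ B * ‖x‖ := by
  let p k : Seminorm 𝕜 X := (normSeminorm 𝕜 (G k)).comp (A k).toLinearMap
  have hbdd : BddAbove (Set.range p) := Seminorm.bddAbove_range_iff.2 fun x =>
    (h x).imp fun C hC => Set.forall_mem_range.2 hC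
  have hcont : Continuous ⇑(⨆ k, p k) := by
    rw [Seminorm.coe_iSup_eq hbdd]
    exact Seminorm.continuous_iSup p (fun k => (A k).continuous.norm) hbdd
  obtain ⟨B, -, hB⟩ := Seminorm.bound_of_continuous_normedSpace _ hcont
  exact ⟨B, fun k x => (Seminorm.le_def.1 (le_ciSup hbdd k) x).trans (hB x)⟩

section Lewis

open Polynomial in
theorem hasDerivAt_det_one_add_smul {𝕜 V : Type*} [NontriviallyNormedField 𝕜] [AddCommGroup V]
    [Module 𝕜 V] [FiniteDimensional 𝕜 V] (L : V →ₗ[𝕜] V) :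
    HasDerivAt (fun t : 𝕜 => LinearMap.det (1 + t • L)) (LinearMap.trace 𝕜 V L) 0 := by
  let b := Module.finBasis 𝕜 V
  let M := LinearMap.toMatrix b b L
  let P : 𝕜[X] := (1 + (X : 𝕜[X]) • M.map C).det
  have hP (t : 𝕜) : LinearMap.det (1 + t • L) = P.eval t := by
    rw [← LinearMap.det_toMatrix b, map_add, map_smul, LinearMap.toMatrix_one, eval_det]
    simp [M, ← Matrix.smul_eq_mul_diagonal]
  simp only [hP]
  rw [LinearMap.trace_eq_matrix_trace 𝕜 b, ← Matrix.derivative_det_one_add_X_smul]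
  exact P.hasDerivAt 0

variable {𝕜 H X : Type*} [RCLike 𝕜] [NormedAddCommGroup H] [NormedSpace 𝕜 H]
  [NormedAddCommGroup X] [NormedSpace 𝕜 X]

/-- The operator `u : H → X` maximizes `|det|` on the unit ball of `H →L[𝕜] X`. Since `|det u|` is
only defined up to a scalar, the competitors are written as `u ∘ L`, where `L` ranges over the
endomorphisms of `H`; for invertible `u` these are all operators. If `H` is a Hilbert space, `u`
maps the unit ball of `H` onto an ellipsoid of maximal volume in the unit ball of `X`. -/
def IsDetMaximal (u : H →L[𝕜] X) : Prop :=
  ‖u‖ ≤ 1 ∧ ∀ L : H →L[𝕜] H, ‖L.det‖ ≤ ‖u ∘L L‖ ^ Module.finrank 𝕜 H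

theorem exists_isDetMaximal [FiniteDimensional 𝕜 H] [FiniteDimensional 𝕜 X]
    (hHX : Module.finrank 𝕜 H = Module.finrank 𝕜 X) : ∃ u : H →L[𝕜] X, IsDetMaximal u := by
  have := FiniteDimensional.proper 𝕜 (H →L[𝕜] X)
  let b : X ≃L[𝕜] H := ContinuousLinearEquiv.ofFinrankEq hHX.symm
  let g (w : H →L[𝕜] X) : ℝ := ‖((b : X →L[𝕜] H) ∘L w).det‖
  have hg : Continuous g :=
    (ContinuousLinearMap.continuous_det.comp (continuous_const.clm_comp continuous_id)).norm
  have hg_comp (w : H →L[𝕜] X) (L : H →L[𝕜] H) : g (w ∘L L) = g w * ‖L.det‖ := by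
    rw [← norm_mul]
    exact congrArg norm (LinearMap.det_comp ((b : X →L[𝕜] H) ∘L w).toLinearMap L.toLinearMap)
  have hg_smul (c : 𝕜) (w : H →L[𝕜] X) : g (c • w) = ‖c‖ ^ Module.finrank 𝕜 H * g w := by
    rw [← norm_pow, ← norm_mul]
    simp only [g, ContinuousLinearMap.comp_smul]
    exact congrArg norm (LinearMap.det_smul c ((b : X →L[𝕜] H) ∘L w).toLinearMap)
  obtain ⟨u, hu, hmax⟩ := (isCompact_closedBall (0 : H →L[𝕜] X) 1).exists_isMaxOn
    ⟨0, by simp⟩ hg.continuousOn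
  have hle (w : H →L[𝕜] X) : g w ≤ ‖w‖ ^ Module.finrank 𝕜 H * g u := by
    rcases eq_or_ne w 0 with rfl | hw
    · simpa using (hg_smul 0 u).le
    · have hw' : ((‖w‖ : 𝕜)⁻¹ • w) ∈ Metric.closedBall 0 1 := by
        simp [norm_smul, hw]
      calc g w = ‖w‖ ^ Module.finrank 𝕜 H * g ((‖w‖ : 𝕜)⁻¹ • w) := by
            conv_lhs => rw [← smul_inv_smul₀ (show (‖w‖ : 𝕜) ≠ 0 by simpa) w, hg_smul]
            simp
        _ ≤ ‖w‖ ^ Module.finrank 𝕜 H * g u := by gcongr; exact hmax hw'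
  have hpos : 0 < g u := by
    have hb : g b.symm = 1 := by simp [g, ContinuousLinearMap.det]
    exact pos_of_mul_pos_right ((hb ▸ one_pos).trans_le (hle b.symm)) (by positivity)
  refine ⟨u, by simpa using hu, fun L => le_of_mul_le_mul_left ?_ hpos⟩
  rw [← hg_comp, mul_comm]
  exact hle (u ∘L L)

theorem IsDetMaximal.re_trace_le [FiniteDimensional 𝕜 H] {u : H →L[𝕜] X} (hu : IsDetMaximal u)
    (L : H →L[𝕜] H) :
    RCLike.re (LinearMap.trace 𝕜 H L) ≤ Module.finrank 𝕜 H * ‖u ∘L L‖ := by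
  set n := Module.finrank 𝕜 H
  let D (t : ℝ) : ℝ := RCLike.re (LinearMap.det (1 + (t : 𝕜) • (L : H →ₗ[𝕜] H)))
  let U (t : ℝ) : ℝ := (1 + t * ‖u ∘L L‖) ^ n
  have hD : HasDerivAt D (RCLike.re (LinearMap.trace 𝕜 H L)) 0 := by
    have hdet := hasDerivAt_det_one_add_smul (L : H →ₗ[𝕜] H)
    rw [← RCLike.ofReal_zero] at hdet
    simpa [D, Function.comp_def] using RCLike.reCLM.hasFDerivAt.comp_hasDerivAt 0
      ((hdet.hasFDerivAt.restrictScalars ℝ).comp_hasDerivAt 0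
        (RCLike.ofRealCLM (K := 𝕜)).hasDerivAt)
  have hU : HasDerivAt U (n * ‖u ∘L L‖) 0 := by
    simpa using (((hasDerivAt_id' (0 : ℝ)).mul_const ‖u ∘L L‖).const_add 1).fun_pow n
  have hDU {t : ℝ} (ht : 0 < t) : D t ≤ U t := by
    have hcomp : ‖u ∘L (1 + (t : 𝕜) • L)‖ ≤ 1 + t * ‖u ∘L L‖ :=
      calc ‖u ∘L (1 + (t : 𝕜) • L)‖ = ‖u + (t : 𝕜) • (u ∘L L)‖ := by
            rw [ContinuousLinearMap.comp_add, ContinuousLinearMap.comp_smul]; rfl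
        _ ≤ 1 + t * ‖u ∘L L‖ := (norm_add_le _ _).trans <| add_le_add hu.1 <| by
            rw [norm_smul, RCLike.norm_of_nonneg ht.le]
    calc D t ≤ ‖(1 + (t : 𝕜) • L).det‖ := RCLike.re_le_norm _
      _ ≤ ‖u ∘L (1 + (t : 𝕜) • L)‖ ^ n := hu.2 _
      _ ≤ U t := pow_le_pow_left₀ (norm_nonneg _) hcomp n
  refine le_of_tendsto_of_tendsto hD.tendsto_slope_zero_right hU.tendsto_slope_zero_right ?_
  filter_upwards [self_mem_nhdsWithin] with t ht
  have h0 : D 0 = U 0 := by simp [D, U]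
  rw [zero_add, h0]
  exact mul_le_mul_of_nonneg_left (sub_le_sub_right (hDU ht) _) (inv_nonneg.2 (le_of_lt ht))

end Lewis

section DvoretzkyRogers

open Module (finrank)

theorem IsDetMaximal.finrank_le_mul_norm_comp_subtypeL {𝕜 H X : Type*} [RCLike 𝕜]
    [NormedAddCommGroup H] [InnerProductSpace 𝕜 H] [FiniteDimensional 𝕜 H] [NormedAddCommGroup X]
    [NormedSpace 𝕜 X] {u : H →L[𝕜] X} (hu : IsDetMaximal u) (V : Submodule 𝕜 H) :
    (finrank 𝕜 V : ℝ) ≤ finrank 𝕜 H * ‖u ∘L V.subtypeL‖ := by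
  have htrace : LinearMap.trace 𝕜 H V.starProjection = finrank 𝕜 V :=
    LinearMap.IsProj.trace ⟨V.starProjection_apply_mem, fun _ => V.starProjection_eq_self_iff.2⟩
  calc (finrank 𝕜 V : ℝ) = RCLike.re (LinearMap.trace 𝕜 H V.starProjection) := by
        rw [htrace, RCLike.natCast_re]
    _ ≤ finrank 𝕜 H * ‖u ∘L V.starProjection‖ := hu.re_trace_le _
    _ ≤ finrank 𝕜 H * ‖u ∘L V.subtypeL‖ := by
        gcongr
        calc ‖u ∘L V.starProjection‖ = ‖(u ∘L V.subtypeL) ∘L V.orthogonalProjectionOnto‖ := rfl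
          _ ≤ ‖u ∘L V.subtypeL‖ * ‖V.orthogonalProjectionOnto‖ :=
            ContinuousLinearMap.opNorm_comp_le _ _
          _ ≤ ‖u ∘L V.subtypeL‖ :=
            mul_le_of_le_one_right (norm_nonneg _) V.orthogonalProjectionOnto_norm_le

theorem exists_norm_eq_one_lt_norm_apply {𝕜 V X : Type*} [RCLike 𝕜] [NormedAddCommGroup V]
    [NormedSpace 𝕜 V] [NormedAddCommGroup X] [NormedSpace 𝕜 X] (A : V →L[𝕜] X) {c : ℝ}
    (hc0 : 0 ≤ c) (hc : c < ‖A‖) : ∃ x, ‖x‖ = 1 ∧ c < ‖A x‖ := by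
  lift c to NNReal using hc0
  obtain ⟨x, hx, hcx⟩ := A.exists_nnnorm_eq_one_lt_apply_of_lt_opNNNorm hc
  exact ⟨x, congrArg NNReal.toReal hx, hcx⟩

theorem IsDetMaximal.exists_orthonormal {𝕜 H X : Type*} [RCLike 𝕜]
    [NormedAddCommGroup H] [InnerProductSpace 𝕜 H] [FiniteDimensional 𝕜 H] [NormedAddCommGroup X]
    [NormedSpace 𝕜 X] {u : H →L[𝕜] X} (hu : IsDetMaximal u) {k : ℕ} (hk : k ≤ finrank 𝕜 H) :
    ∃ v : Fin k → H, Orthonormal 𝕜 v ∧ ∀ i, 1 - (k : ℝ) / finrank 𝕜 H < ‖u (v i)‖ := by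
  induction k with
  | zero => exact ⟨Fin.elim0, by simp [Orthonormal, Pairwise], fun i => i.elim0⟩
  | succ k ih =>
    obtain ⟨v, hv, hvu⟩ := ih (Nat.le_of_succ_le hk)
    have hH : (0 : ℝ) < finrank 𝕜 H := by exact_mod_cast k.succ_pos.trans_le hk
    have hlt : 1 - ((k + 1 : ℕ) : ℝ) / finrank 𝕜 H < 1 - (k : ℝ) / finrank 𝕜 H := by
      gcongr
      exact k.lt_succ_self
    let V := (Submodule.span 𝕜 (Set.range v))ᗮ
    have hV : finrank 𝕜 V = finrank 𝕜 H - k := by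
      have := (Submodule.span 𝕜 (Set.range v)).finrank_add_finrank_orthogonal
      rw [finrank_span_eq_card hv.linearIndependent, Fintype.card_fin] at this
      exact Nat.eq_sub_of_add_eq' this
    have hnorm : 1 - ((k + 1 : ℕ) : ℝ) / finrank 𝕜 H < ‖u ∘L V.subtypeL‖ := by
      refine hlt.trans_le ?_
      have := hu.finrank_le_mul_norm_comp_subtypeL V
      rw [hV, Nat.cast_sub (Nat.le_of_succ_le hk)] at this
      rwa [one_sub_div hH.ne', div_le_iff₀' hH]
    obtain ⟨x, hx, hxu⟩ := exists_norm_eq_one_lt_norm_apply (u ∘L V.subtypeL)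
      (sub_nonneg.2 <| (div_le_one hH).2 <| by exact_mod_cast hk) hnorm
    refine ⟨Matrix.vecCons (x : H) v, orthonormal_vecCons_iff.2 ⟨hx, fun i => ?_, hv⟩,
      Fin.cases hxu fun i => hlt.trans (hvu i)⟩
    exact (Submodule.mem_orthogonal' _ _).1 x.2 _ (Submodule.subset_span ⟨i, rfl⟩)

theorem exists_submodule_finrank_eq {K V : Type*} [DivisionRing K] [AddCommGroup V] [Module K V]
    (hV : ¬ FiniteDimensional K V) (n : ℕ) :
    ∃ W : Submodule K V, FiniteDimensional K W ∧ finrank K W = n := by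
  have hn : (n : Cardinal) ≤ Module.rank K V := by
    rw [FiniteDimensional, ← Module.rank_lt_aleph0_iff, not_lt] at hV
    exact Cardinal.natCast_lt_aleph0.le.trans hV
  obtain ⟨f, hf⟩ := exists_linearIndependent_of_le_rank hn
  exact ⟨Submodule.span K (Set.range f), FiniteDimensional.span_of_finite K (Set.finite_range f),
    by simpa using finrank_span_eq_card hf⟩

theorem exists_linearIsometry_single_eq {𝕜 ι H : Type*} [RCLike 𝕜] [Fintype ι] [DecidableEq ι]
    [NormedAddCommGroup H] [InnerProductSpace 𝕜 H] {v : ι → H} (hv : Orthonormal 𝕜 v) :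
    ∃ J : EuclideanSpace 𝕜 ι →ₗᵢ[𝕜] H, ∀ i, J (EuclideanSpace.single i 1) = v i := by
  let b := EuclideanSpace.basisFun ι 𝕜
  have hconstr (i : ι) : b.toBasis.constr 𝕜 v (EuclideanSpace.single i 1) = v i := by
    simp [b]
  refine ⟨(b.toBasis.constr 𝕜 v).isometryOfOrthonormal (v := b.toBasis) (by simp) ?_, hconstr⟩
  simp [Function.comp_def, b, hconstr, hv]

/-- This is the Dvoretzky–Rogers lemma. -/
theorem exists_norm_le_one_lt_norm_apply_single {𝕜 F : Type*} [RCLike 𝕜] [NormedAddCommGroup F]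
    [NormedSpace 𝕜 F] (hF : ¬ FiniteDimensional 𝕜 F) (k : ℕ) {c : ℝ} (hc : c < 1) :
    ∃ Y : EuclideanSpace 𝕜 (Fin k) →L[𝕜] F,
      ‖Y‖ ≤ 1 ∧ ∀ j, c < ‖Y (EuclideanSpace.single j 1)‖ := by
  obtain ⟨n, hn⟩ := exists_nat_gt (k / (1 - c))
  obtain ⟨X, hX, hXn⟩ := exists_submodule_finrank_eq hF (n + k)
  obtain ⟨u, hu⟩ := exists_isDetMaximal (𝕜 := 𝕜) (H := EuclideanSpace 𝕜 (Fin (n + k))) (X := X)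
    (by rw [finrank_euclideanSpace_fin, hXn])
  obtain ⟨v, hv, hvu⟩ := hu.exists_orthonormal (k := k) (by simp)
  obtain ⟨J, hJ⟩ := exists_linearIsometry_single_eq hv
  refine ⟨X.subtypeL ∘L u ∘L J.toContinuousLinearMap,
    ContinuousLinearMap.opNorm_le_bound _ zero_le_one fun x => ?_, fun j => ?_⟩
  · calc ‖u (J x)‖ ≤ 1 * ‖J x‖ := u.le_of_opNorm_le hu.1 _
      _ = 1 * ‖x‖ := by rw [J.norm_map]
  · have hc1 : 0 < 1 - c := sub_pos.2 hc
    have hn0 : (0 : ℝ) < n := (by positivity : (0 : ℝ) ≤ k / (1 - c)).trans_lt hn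
    calc c < 1 - (k : ℝ) / (n + k : ℕ) := by
          have hkn : (k : ℝ) / (n + k : ℕ) ≤ k / n := by gcongr; simp
          have := (div_lt_comm₀ hc1 hn0).1 hn
          linarith
      _ < ‖u (v j)‖ := by simpa using hvu j
      _ = ‖u (J (EuclideanSpace.single j 1))‖ := by rw [hJ]

end DvoretzkyRogers

section LinftyFactorization

variable {𝕜 : Type*} [RCLike 𝕜]

theorem exists_pi_extension_norm_le {ι E : Type*} [Fintype ι] [NormedAddCommGroup E]
    [NormedSpace 𝕜 E] {N : Submodule 𝕜 E} (f : N →L[𝕜] (ι → 𝕜)) :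
    ∃ g : E →L[𝕜] (ι → 𝕜), g ∘L N.subtypeL = f ∧ ‖g‖ ≤ ‖f‖ := by
  choose g hgf hg using fun i =>
    exists_extension_norm_eq N (ContinuousLinearMap.proj (R := 𝕜) (φ := fun _ : ι => 𝕜) i ∘L f)
  refine ⟨ContinuousLinearMap.pi g, by ext x i; exact hgf i x, ?_⟩
  refine ContinuousLinearMap.opNorm_le_bound _ (norm_nonneg f) fun x => ?_
  refine (pi_norm_le_iff_of_nonneg (by positivity)).2 fun i => (g i).le_of_opNorm_le ?_ x
  rw [hg]
  exact ContinuousLinearMap.opNorm_le_bound _ (norm_nonneg f) fun y =>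
    (norm_le_pi_norm (f y) i).trans (f.le_opNorm y)

theorem exists_pi_retraction_of_injective {ι κ : Type*} [Fintype ι] [Fintype κ] {f : ι → κ}
    (hf : f.Injective) : ∃ (J : (ι → 𝕜) →L[𝕜] (κ → 𝕜)) (R : (κ → 𝕜) →L[𝕜] (ι → 𝕜)),
      R ∘L J = .id 𝕜 _ ∧ ‖R‖ ≤ 1 ∧ ‖J‖ ≤ 1 := by
  refine ⟨(Function.ExtendByZero.linearMap 𝕜 f).toContinuousLinearMap,
    (LinearMap.funLeft 𝕜 𝕜 f).toContinuousLinearMap, ?_, ?_, ?_⟩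
  · ext x i
    simp [hf.extend_apply]
  · refine ContinuousLinearMap.opNorm_le_bound _ zero_le_one fun x => ?_
    rw [one_mul]
    exact (pi_norm_le_iff_of_nonneg (norm_nonneg x)).2 fun i => norm_le_pi_norm x (f i)
  · refine ContinuousLinearMap.opNorm_le_bound _ zero_le_one fun x => ?_
    rw [one_mul]
    refine (pi_norm_le_iff_of_nonneg (norm_nonneg x)).2 fun j => ?_
    by_cases hj : ∃ i, f i = j
    · obtain ⟨i, rfl⟩ := hj
      simpa [hf.extend_apply] using norm_le_pi_norm x i
    · simp [Function.extend_apply' _ _ _ hj]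

theorem exists_retraction_norm_le_one {V E : Type*} [NormedAddCommGroup V] [NormedSpace 𝕜 V]
    [NormedAddCommGroup E] [NormedSpace 𝕜 E] {J : V →L[𝕜] E} {R : E →L[𝕜] V}
    (hRJ : R ∘L J = .id 𝕜 V) : ∃ (J' : V →L[𝕜] E) (R' : E →L[𝕜] V),
      R' ∘L J' = .id 𝕜 V ∧ ‖R'‖ ≤ 1 ∧ ‖J'‖ ≤ ‖R‖ * ‖J‖ := by
  rcases eq_or_ne R 0 with rfl | hR
  · have hJ : J = 0 := by
      rw [← J.comp_id, ← hRJ, ContinuousLinearMap.zero_comp, ContinuousLinearMap.comp_zero]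
    exact ⟨J, 0, hRJ, by simp, by simp [hJ]⟩
  · have hR' : (‖R‖ : 𝕜) ≠ 0 := by simpa
    refine ⟨(‖R‖ : 𝕜) • J, (‖R‖ : 𝕜)⁻¹ • R, ?_, ?_, ?_⟩
    · rw [ContinuousLinearMap.smul_comp, ContinuousLinearMap.comp_smul, inv_smul_smul₀ hR', hRJ]
    · simp [norm_smul, hR]
    · simp [norm_smul]

theorem IsLinftySpace.exists_pi_retraction {E : Type*} [NormedAddCommGroup E] [NormedSpace 𝕜 E]
    (hE : IsLinftySpace 𝕜 E) (hEinf : ¬ FiniteDimensional 𝕜 E) :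
    ∃ lam : ℝ, ∀ d : ℕ, ∃ (J : (Fin d → 𝕜) →L[𝕜] E) (R : E →L[𝕜] (Fin d → 𝕜)),
      R ∘L J = .id 𝕜 _ ∧ ‖R‖ ≤ 1 ∧ ‖J‖ ≤ lam := by
  obtain ⟨lam, -, hlam⟩ := hE
  refine ⟨lam, fun d => ?_⟩
  obtain ⟨M, hM, hMd⟩ := exists_submodule_finrank_eq hEinf d
  obtain ⟨N, hMN, hN, v, hv⟩ := hlam M hM
  obtain ⟨w, hwv, hw⟩ := exists_pi_extension_norm_le v.toContinuousLinearMap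
  obtain ⟨J₀, R₀, hRJ₀, hR₀, hJ₀⟩ := exists_pi_retraction_of_injective (𝕜 := 𝕜)
    (Fin.castLE_injective (hMd ▸ Submodule.finrank_mono hMN))
  have hRJ : (R₀ ∘L w) ∘L (N.subtypeL ∘L v.symm ∘L J₀) = .id 𝕜 _ := by
    calc (R₀ ∘L w) ∘L (N.subtypeL ∘L v.symm ∘L J₀)
        = R₀ ∘L (w ∘L N.subtypeL) ∘L v.symm ∘L J₀ := rfl
      _ = R₀ ∘L J₀ := by rw [hwv]; ext; simp
      _ = .id 𝕜 _ := hRJ₀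
  have hRw : ‖R₀ ∘L w‖ ≤ ‖v.toContinuousLinearMap‖ :=
    calc ‖R₀ ∘L w‖ ≤ ‖R₀‖ * ‖w‖ := R₀.opNorm_comp_le w
      _ ≤ 1 * ‖v.toContinuousLinearMap‖ := by gcongr
      _ = ‖v.toContinuousLinearMap‖ := one_mul _
  have hvJ : ‖N.subtypeL ∘L v.symm ∘L J₀‖ ≤ ‖v.symm.toContinuousLinearMap‖ :=
    calc ‖N.subtypeL ∘L v.symm ∘L J₀‖
        ≤ ‖N.subtypeL‖ * ‖v.symm.toContinuousLinearMap ∘L J₀‖ :=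
          ContinuousLinearMap.opNorm_comp_le _ _
      _ ≤ 1 * (‖v.symm.toContinuousLinearMap‖ * ‖J₀‖) := by
        gcongr
        exacts [N.norm_subtypeL_le, ContinuousLinearMap.opNorm_comp_le _ _]
      _ ≤ ‖v.symm.toContinuousLinearMap‖ := by
        rw [one_mul]
        exact mul_le_of_le_one_right (norm_nonneg _) hJ₀
  obtain ⟨J, R, h, hR, hJ⟩ := exists_retraction_norm_le_one hRJ
  exact ⟨J, R, h, hR, hJ.trans <| (mul_le_mul hRw hvJ (norm_nonneg _) (norm_nonneg _)).trans hv⟩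

end LinftyFactorization

section Main

variable {𝕜 : Type*} [RCLike 𝕜] {F : Type*} [NormedAddCommGroup F] [NormedSpace 𝕜 F]

theorem norm_euclideanSpace_equiv_symm_le (ι : Type*) [Fintype ι] :
    ‖((EuclideanSpace.equiv ι 𝕜).symm : (ι → 𝕜) →L[𝕜] EuclideanSpace 𝕜 ι)‖ ≤ √(Fintype.card ι) := by
  refine ContinuousLinearMap.opNorm_le_bound _ (Real.sqrt_nonneg _) fun x => ?_
  calc ‖(EuclideanSpace.equiv ι 𝕜).symm x‖ = √(∑ i, ‖x i‖ ^ 2) := EuclideanSpace.norm_eq _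
    _ ≤ √(∑ _i : ι, ‖x‖ ^ 2) := by gcongr with i; exact norm_le_pi_norm x i
    _ = √(Fintype.card ι) * ‖x‖ := by simp [Real.sqrt_sq]

theorem exists_pi_norm_le_sqrt_lt_norm_apply_single (hF : ¬ FiniteDimensional 𝕜 F) (k : ℕ) {c : ℝ}
    (hc : c < 1) :
    ∃ Y : (Fin k → 𝕜) →L[𝕜] F, ‖Y‖ ≤ √k ∧ ∀ j, c < ‖Y (Pi.single j 1)‖ := by
  obtain ⟨Y, hY, hYc⟩ := exists_norm_le_one_lt_norm_apply_single hF k hc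
  let S : (Fin k → 𝕜) →L[𝕜] EuclideanSpace 𝕜 (Fin k) := (EuclideanSpace.equiv (Fin k) 𝕜).symm
  have hS : ‖S‖ ≤ √k := by simpa using norm_euclideanSpace_equiv_symm_le (𝕜 := 𝕜) (Fin k)
  refine ⟨Y ∘L S, ?_, hYc⟩
  calc ‖Y ∘L S‖ ≤ ‖Y‖ * ‖S‖ := Y.opNorm_comp_le S
    _ ≤ ‖S‖ := mul_le_of_le_one_left (norm_nonneg _) hY
    _ ≤ √k := hS

theorem exists_nat_mul_sqrt_lt_rpow {s : ℝ} (hs : 1 / 2 < s) (B : ℝ) :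
    ∃ k : ℕ, B * √k < (k : ℝ) ^ s := by
  have hlim := (tendsto_rpow_atTop (sub_pos.2 hs)).comp tendsto_natCast_atTop_atTop
  obtain ⟨k, hB, hk⟩ :=
    ((hlim.eventually_gt_atTop B).and (Filter.eventually_gt_atTop 0)).exists
  have hk' : (0 : ℝ) < k := by exact_mod_cast hk
  refine ⟨k, ?_⟩
  calc B * √k < (k : ℝ) ^ (s - 1 / 2) * √k := by gcongr; exact hB
    _ = (k : ℝ) ^ s := by rw [Real.sqrt_eq_rpow, ← Real.rpow_add hk', sub_add_cancel]

variable {ι : Type*} [Fintype ι] {E : ι → Type*} [∀ i, NormedAddCommGroup (E i)]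
  [∀ i, NormedSpace 𝕜 (E i)]

/-- The multilinear map `x ↦ Y (∏ i, R i (x i))` obtained by mapping all arguments into `ℓ_∞(κ)`,
multiplying them coordinatewise there, and applying `Y`. -/
noncomputable def diagonalMultilinear {κ : Type*} [Fintype κ] (R : ∀ i, E i →L[𝕜] (κ → 𝕜))
    (Y : (κ → 𝕜) →L[𝕜] F) : ContinuousMultilinearMap 𝕜 E F :=
  Y.compContinuousMultilinearMap
    ((ContinuousMultilinearMap.mkPiAlgebra 𝕜 ι (κ → 𝕜)).compContinuousLinearMap R)

theorem norm_diagonalMultilinear_le [Nonempty ι] {κ : Type*} [Fintype κ]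
    {R : ∀ i, E i →L[𝕜] (κ → 𝕜)} (hR : ∀ i, ‖R i‖ ≤ 1) (Y : (κ → 𝕜) →L[𝕜] F) :
    ‖diagonalMultilinear R Y‖ ≤ ‖Y‖ := by
  let P := ContinuousMultilinearMap.mkPiAlgebra 𝕜 ι (κ → 𝕜)
  have hP : ‖P.compContinuousLinearMap R‖ ≤ 1 :=
    calc ‖P.compContinuousLinearMap R‖ ≤ ‖P‖ * ∏ i, ‖R i‖ := P.norm_compContinuousLinearMap_le R
      _ ≤ 1 := mul_le_one₀ ContinuousMultilinearMap.norm_mkPiAlgebra_le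
        (Finset.prod_nonneg fun _ _ => norm_nonneg _)
        (Finset.prod_le_one (fun _ _ => norm_nonneg _) fun i _ => hR i)
  calc ‖diagonalMultilinear R Y‖ ≤ ‖Y‖ * ‖P.compContinuousLinearMap R‖ :=
        Y.norm_compContinuousMultilinearMap_le _
    _ ≤ ‖Y‖ := mul_le_of_le_one_right (norm_nonneg _) hP

theorem diagonalMultilinear_apply_of_isIdempotentElem [Nonempty ι] {κ : Type*} [Fintype κ]
    {R : ∀ i, E i →L[𝕜] (κ → 𝕜)} {Y : (κ → 𝕜) →L[𝕜] F} {x : ∀ i, E i} {e : κ → 𝕜}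
    (he : IsIdempotentElem e) (hx : ∀ i, R i (x i) = e) : diagonalMultilinear R Y x = Y e := by
  simp [diagonalMultilinear, hx, he.pow_eq Fintype.card_ne_zero]

theorem exists_norm_apply_le_of_forall_absSummingWith [CompleteSpace F] {p : ℝ} (hp : 1 ≤ p)
    {q : ι → ℝ} (H : ∀ T : ContinuousMultilinearMap 𝕜 E F, ∃ C, AbsSummingWith 𝕜 p q C T)
    {x : ∀ k i, Fin k → E i} {lam : ι → ℝ} (hx : ∀ k i, weakLpNorm 𝕜 (q i) (x k i) ≤ lam i) :
    ∃ B, ∀ k (T : ContinuousMultilinearMap 𝕜 E F),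
      (∑ j, ‖T fun i => x k i j‖ ^ p) ^ (1 / p) ≤ B * ‖T‖ := by
  have hpr : (ENNReal.ofReal p).toReal = p := ENNReal.toReal_ofReal (zero_le_one.trans hp)
  have : Fact (1 ≤ ENNReal.ofReal p) := ⟨ENNReal.one_le_ofReal.2 hp⟩
  let A (k : ℕ) : ContinuousMultilinearMap 𝕜 E F →L[𝕜] PiLp (ENNReal.ofReal p) fun _ : Fin k => F :=
    (PiLp.continuousLinearEquiv _ 𝕜 _).symm.toContinuousLinearMap ∘L
      ContinuousLinearMap.pi fun j => ContinuousMultilinearMap.apply 𝕜 E F fun i => x k i j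
  have hA (k : ℕ) (T) : ‖A k T‖ = (∑ j, ‖T fun i => x k i j‖ ^ p) ^ (1 / p) := by
    rw [PiLp.norm_eq_sum (hpr.symm ▸ zero_lt_one.trans_le hp), hpr]
    rfl
  simp only [← hA]
  refine exists_bound_of_pointwise_bounded A fun T => ?_
  obtain ⟨C, hC⟩ := H T
  refine ⟨|C| * ∏ i, lam i, fun k => ?_⟩
  calc ‖A k T‖ ≤ C * ∏ i, weakLpNorm 𝕜 (q i) (x k i) := (hA k T).trans_le (hC k (x k))
    _ ≤ |C| * ∏ i, lam i := by
      gcongr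
      exacts [Finset.prod_nonneg fun i _ => weakLpNorm_nonneg (𝕜 := 𝕜) (x k i), le_abs_self C,
        fun i _ => weakLpNorm_nonneg (x k i), hx k _]

theorem finiteDimensional_of_absSumming_Linfty_general [Nonempty ι]
    (hE : ∀ i, IsLinftySpace 𝕜 (E i)) (hEinf : ∀ i, ¬ FiniteDimensional 𝕜 (E i))
    [CompleteSpace F] {p : ℝ} (hp : 0 < p) (hp2 : p < 2) {q : ι → ℝ} (hq : ∀ i, 1 ≤ q i)
    (H : ∀ T : ContinuousMultilinearMap 𝕜 E F, ∃ C, AbsSummingWith 𝕜 p q C T) :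
    FiniteDimensional 𝕜 F := by
  by_contra hF
  set r := max p 1
  have hr : 1 ≤ r := le_max_right _ _
  have hr0 : 0 < r := zero_lt_one.trans_le hr
  have hr2 : 1 / 2 < 1 / r := one_div_lt_one_div_of_lt hr0 (max_lt hp2 one_lt_two)
  choose lam J R hRJ hR hJ using fun i => (hE i).exists_pi_retraction (hEinf i)
  obtain ⟨B, hB⟩ := exists_norm_apply_le_of_forall_absSummingWith hr
    (fun T => (H T).imp fun C hC => hC.of_exponent_le hp (le_max_left p 1))
    (x := fun k i j => J i k (Pi.single j 1))
    fun k i => (weakLpNorm_apply_single_le_norm (hq i) (J i k)).trans (hJ i k)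
  obtain ⟨k, hk⟩ := exists_nat_mul_sqrt_lt_rpow hr2 (2 * |B|)
  obtain ⟨Y, hY, hYj⟩ := exists_pi_norm_le_sqrt_lt_norm_apply_single hF k one_half_lt_one
  let T := diagonalMultilinear (fun i => R i k) Y
  have hT (j) : T (fun i => J i k (Pi.single j 1)) = Y (Pi.single j 1) :=
    diagonalMultilinear_apply_of_isIdempotentElem
      (by rw [IsIdempotentElem, ← Pi.single_mul, one_mul]) fun i => DFunLike.congr_fun (hRJ i k) _
  have hlower : (k : ℝ) ^ (1 / r) * (1 / 2) ≤ (∑ j, ‖Y (Pi.single j 1)‖ ^ r) ^ (1 / r) := by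
    simpa using card_rpow_mul_le_rpow_sum Finset.univ hr0 one_half_pos.le fun j _ => (hYj j).le
  have hupper : (∑ j, ‖Y (Pi.single j 1)‖ ^ r) ^ (1 / r) ≤ |B| * √k := by
    calc (∑ j, ‖Y (Pi.single j 1)‖ ^ r) ^ (1 / r) ≤ B * ‖T‖ := by simpa only [hT] using hB k T
      _ ≤ |B| * √k := by
        gcongr
        exacts [le_abs_self B, (norm_diagonalMultilinear_le (fun i => hR i k) Y).trans hY]
  linarith

end Main

/-- Let `E₁,…,E_kv` be infinite-dimensional `𝓛_∞`-spaces. If `F` is a Banach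
space such that for every choice of further Banach spaces `G₁,…,G_m`, every continuous
multilinear map from `E₁ × ⋯ × E_kv × G₁ × ⋯ × G_m` into `F` is absolutely
`(1; 2,…,2,1,…,1)`-summing, then `F` is finite-dimensional. -/
theorem finiteDimensional_of_absSumming_Linfty {𝕜 : Type v} [RCLike 𝕜] {kv m : ℕ}
    (hkv : 1 ≤ kv)
    {E : Fin kv → Type u} [∀ i, NormedAddCommGroup (E i)] [∀ i, NormedSpace 𝕜 (E i)]
    [∀ i, CompleteSpace (E i)]
    (hE : ∀ i, IsLinftySpace 𝕜 (E i)) (hEinf : ∀ i, ¬ FiniteDimensional 𝕜 (E i))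
    {F : Type*} [NormedAddCommGroup F] [NormedSpace 𝕜 F] [CompleteSpace F]
    (H : ∀ (G : Fin m → Type u) [∀ j, NormedAddCommGroup (G j)] [∀ j, NormedSpace 𝕜 (G j)]
      [∀ j, CompleteSpace (G j)],
      letI : ∀ i : Fin kv ⊕ Fin m, NormedAddCommGroup (Sum.elim E G i) := fun i =>
        Sum.rec (motive := fun i => NormedAddCommGroup (Sum.elim E G i))
          (fun a => inferInstanceAs (NormedAddCommGroup (E a)))
          (fun b => inferInstanceAs (NormedAddCommGroup (G b))) i
      letI : ∀ i : Fin kv ⊕ Fin m, NormedSpace 𝕜 (Sum.elim E G i) := fun i =>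
        Sum.rec (motive := fun i => NormedSpace 𝕜 (Sum.elim E G i))
          (fun a => inferInstanceAs (NormedSpace 𝕜 (E a)))
          (fun b => inferInstanceAs (NormedSpace 𝕜 (G b))) i
      ∀ T : ContinuousMultilinearMap 𝕜 (Sum.elim E G) F,
        ∃ C, 0 ≤ C ∧
          AbsSummingWith 𝕜 1 (Sum.elim (fun _ => 2) (fun _ => 1)) C ⇑T) :
    FiniteDimensional 𝕜 F := by
  have : Nonempty (Fin kv ⊕ Fin m) := ⟨Sum.inl ⟨0, hkv⟩⟩
  exact @finiteDimensional_of_absSumming_Linfty_general 𝕜 _ F _ _ (Fin kv ⊕ Fin m) _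
    (Sum.elim E fun _ => E ⟨0, hkv⟩) (_) (_) _ (Sum.rec hE fun _ => hE ⟨0, hkv⟩)
    (Sum.rec hEinf fun _ => hEinf ⟨0, hkv⟩) _ 1 one_pos one_lt_two
    (Sum.elim (fun _ => 2) fun _ => 1) (Sum.rec (fun _ => one_le_two) fun _ => le_rfl)
    fun T => (H (fun _ => E ⟨0, hkv⟩) T).imp fun _ hC => hC.2
end

section
/- Let E, F be Banach spaces, n ≥ 2 and 0 < p < ∞. Every p-dominated continuous n-linear map T : E × ⋯ × E → F is p-semi-integral. -/
open MeasureTheory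

/-!
If `μ i` are the measures of the domination inequality, then by Fubini the product of their
integrals is an integral against the product measure. For nonseparable spaces this measure may live
on a σ-algebra smaller than the Borel σ-algebra of the product and then is not itself admissible.
By Stone–Weierstrass, continuous functions are nevertheless measurable for the smaller σ-algebra,
and the Riesz–Markov–Kakutani theorem replaces the product measure by a regular Borel measure with
the same integrals of continuous functions.
-/

section MeasurableContinuousMaps

/-- The subalgebra of `C(X, ℝ)` of functions measurable for a σ-algebra on `X` which need not
contain the open sets. -/
def measurableSubalgebra (X : Type*) [TopologicalSpace X] [MeasurableSpace X] :
    Subalgebra ℝ C(X, ℝ) where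
  carrier := {f | Measurable f}
  mul_mem' hf hg := Measurable.mul hf hg
  add_mem' hf hg := Measurable.add hf hg
  algebraMap_mem' _ := measurable_const

theorem isClosed_measurableSubalgebra (X : Type*) [TopologicalSpace X] [CompactSpace X]
    [MeasurableSpace X] : IsClosed (measurableSubalgebra X : Set C(X, ℝ)) :=
  IsSeqClosed.isClosed fun _ f hu huf =>
    measurable_of_tendsto_metrizable hu <|
      tendsto_pi_nhds.2 fun x => ((continuous_eval_const x).tendsto f).comp huf

theorem measurable_of_separatesPoints_measurableSubalgebra {X : Type*} [TopologicalSpace X]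
    [CompactSpace X] [MeasurableSpace X] (h : (measurableSubalgebra X).SeparatesPoints)
    (f : C(X, ℝ)) : Measurable f := by
  have hf : f ∈ (measurableSubalgebra X).topologicalClosure :=
    ContinuousMap.continuousMap_mem_subalgebra_closure_of_separatesPoints _ h f
  exact Subalgebra.topologicalClosure_minimal le_rfl (isClosed_measurableSubalgebra X) hf

variable {ι : Type*} {X : ι → Type*} [∀ i, TopologicalSpace (X i)] [∀ i, MeasurableSpace (X i)]
  [∀ i, OpensMeasurableSpace (X i)]

theorem separatesPoints_measurableSubalgebra_pi [∀ i, T35Space (X i)] :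
    (measurableSubalgebra (∀ i, X i)).SeparatesPoints := by
  intro x y hxy
  obtain ⟨i, hi⟩ := Function.ne_iff.mp hxy
  obtain ⟨f, hf, hfxy⟩ := separatesPoints_continuous_of_t35Space hi
  have hf_meas : Measurable fun z : ∀ i, X i => f (z i) :=
    hf.measurable.comp (measurable_pi_apply i)
  exact ⟨_, ⟨⟨_, hf.comp (continuous_apply i)⟩, hf_meas, rfl⟩, hfxy⟩

theorem measurable_continuousMap_pi [∀ i, CompactSpace (X i)] [∀ i, T2Space (X i)]
    (f : C(∀ i, X i, ℝ)) : Measurable f :=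
  measurable_of_separatesPoints_measurableSubalgebra separatesPoints_measurableSubalgebra_pi f

end MeasurableContinuousMaps

section RegularBorelMeasures

/-- Unlike for `Measure.map`, the map `g` need not be measurable for the Borel σ-algebra of `K`. -/
theorem exists_regular_integral_eq_integral_comp {Ω K : Type*} {mΩ : MeasurableSpace Ω}
    [TopologicalSpace K] [CompactSpace K] [T2Space K] [MeasurableSpace K] [BorelSpace K]
    (μ : Measure Ω) [IsFiniteMeasure μ] {g : Ω → K}
    (hg : ∀ f : C(K, ℝ), AEStronglyMeasurable (fun ω => f (g ω)) μ) :
    ∃ ν : Measure K, ν.Regular ∧ ∀ f : C(K, ℝ), ∫ x, f x ∂ν = ∫ ω, f (g ω) ∂μ := by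
  have hint (f : C(K, ℝ)) : Integrable (fun ω => f (g ω)) μ :=
    .of_bound (hg f) ‖f‖ (.of_forall fun ω => f.norm_coe_le_norm (g ω))
  let Λ : CompactlySupportedContinuousMap K ℝ →ₚ[ℝ] ℝ :=
    { toFun f := ∫ ω, f (g ω) ∂μ
      map_add' f₁ f₂ := integral_add (hint f₁) (hint f₂)
      map_smul' c f := integral_const_mul c fun ω => f (g ω)
      monotone' f₁ f₂ hf := integral_mono (hint f₁) (hint f₂) fun ω => hf (g ω) }
  exact ⟨RealRMK.rieszMeasure Λ, inferInstance, fun f =>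
    RealRMK.integral_rieszMeasure Λ (CompactlySupportedContinuousMap.continuousMapEquiv f)⟩

theorem exists_regular_integral_prod_eq_prod_integral {ι : Type*} [Fintype ι] {X : ι → Type*}
    [∀ i, TopologicalSpace (X i)] [∀ i, CompactSpace (X i)] [∀ i, T2Space (X i)]
    [∀ i, MeasurableSpace (X i)] [∀ i, OpensMeasurableSpace (X i)]
    [MeasurableSpace (∀ i, X i)] [BorelSpace (∀ i, X i)]
    (μ : ∀ i, Measure (X i)) [∀ i, IsFiniteMeasure (μ i)] :
    ∃ ν : Measure (∀ i, X i), ν.Regular ∧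
      ∀ f : ∀ i, C(X i, ℝ), ∫ x, ∏ i, f i (x i) ∂ν = ∏ i, ∫ x, f i x ∂μ i := by
  -- Here `∀ i, X i` carries two σ-algebras: `Measure.pi μ` uses the product one, `ν` the Borel one.
  obtain ⟨ν, hν, hint⟩ := exists_regular_integral_eq_integral_comp (Measure.pi μ) (g := id)
    fun f => (measurable_continuousMap_pi f).aestronglyMeasurable
  refine ⟨ν, hν, fun f => ?_⟩
  let F : C(∀ i, X i, ℝ) := ⟨fun x => ∏ i, f i (x i), by fun_prop⟩
  exact (hint F).trans (integral_fintype_prod_eq_prod fun i => f i)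

end RegularBorelMeasures

section WeakDualUnitBall

variable {𝕜 : Type*} [RCLike 𝕜] {E : Type*} [NormedAddCommGroup E] [NormedSpace 𝕜 E]

variable (𝕜 E) in
/-- The closed unit ball of the dual of `E` with its weak-star topology, in the pointwise form
`‖φ z‖ ≤ ‖z‖` used in `DominatedWith` and `SemiIntegralWith`. -/
abbrev WeakDualUnitBall : Type _ := {φ : WeakDual 𝕜 E // ∀ z, ‖φ z‖ ≤ ‖z‖}

instance WeakDualUnitBall.instCompactSpace : CompactSpace (WeakDualUnitBall 𝕜 E) := by
  have hball : WeakDual.toStrongDual ⁻¹' Metric.closedBall (0 : StrongDual 𝕜 E) 1 =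
      {φ : WeakDual 𝕜 E | ∀ z, ‖φ z‖ ≤ ‖z‖} := by
    ext φ
    simp [ContinuousLinearMap.opNorm_le_iff]
  have hcompact : IsCompact {φ : WeakDual 𝕜 E | ∀ z, ‖φ z‖ ≤ ‖z‖} :=
    hball ▸ WeakDual.isCompact_closedBall 0 1
  exact isCompact_iff_compactSpace.mp hcompact

theorem WeakDualUnitBall.continuous_norm_apply_rpow {p : ℝ} (hp : 0 ≤ p) (z : E) :
    Continuous fun φ : WeakDualUnitBall 𝕜 E => ‖φ.1 z‖ ^ p :=
  ((WeakDual.eval_continuous z).comp continuous_subtype_val).norm.rpow_const fun _ => .inr hp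

end WeakDualUnitBall

theorem semiIntegral_of_dominated_general {𝕜 : Type*} [RCLike 𝕜] {ι : Type*} [Fintype ι]
    {E : ι → Type*} [∀ i, NormedAddCommGroup (E i)] [∀ i, NormedSpace 𝕜 (E i)]
    {F : Type*} [NormedAddCommGroup F] {p : ℝ} (hp : 0 < p) {C : ℝ} {T : (∀ i, E i) → F}
    (hT : DominatedWith 𝕜 p C T) : SemiIntegralWith 𝕜 p C T := by
  let : ∀ i, MeasurableSpace (WeakDualUnitBall 𝕜 (E i)) := fun _ => borel _
  have : ∀ i, BorelSpace (WeakDualUnitBall 𝕜 (E i)) := fun _ => ⟨rfl⟩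
  let : MeasurableSpace (∀ i, WeakDualUnitBall 𝕜 (E i)) := borel _
  have : BorelSpace (∀ i, WeakDualUnitBall 𝕜 (E i)) := ⟨rfl⟩
  obtain ⟨μ, hμ, -, hbound⟩ := hT
  obtain ⟨ν, hν_reg, hν⟩ := exists_regular_integral_prod_eq_prod_integral μ
  have hν_prob : IsProbabilityMeasure ν :=
    isProbabilityMeasure_iff_real.mpr (by simpa using hν fun _ => 1)
  refine ⟨ν, hν_prob, hν_reg, fun x => ?_⟩
  have hprod : ∫ φ, ∏ i, ‖(φ i).1 (x i)‖ ^ p ∂ν = ∏ i, ∫ φ, ‖φ.1 (x i)‖ ^ p ∂μ i :=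
    hν fun i => ⟨_, WeakDualUnitBall.continuous_norm_apply_rpow hp.le (x i)⟩
  calc ‖T x‖ ≤ C * ∏ i, (∫ φ, ‖φ.1 (x i)‖ ^ p ∂μ i) ^ (1 / p) := hbound x
    _ = C * (∏ i, ∫ φ, ‖φ.1 (x i)‖ ^ p ∂μ i) ^ (1 / p) := by
      rw [Real.finsetProd_rpow _ _ fun i _ => integral_nonneg fun φ => by positivity]
    _ = C * (∫ φ, ∏ i, ‖(φ i).1 (x i)‖ ^ p ∂ν) ^ (1 / p) := by rw [hprod]

/-- Every `p`-dominated continuous `n`-linear map (`n ≥ 2`) is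
`p`-semi-integral. -/
theorem semiIntegral_of_dominated {𝕜 : Type*} [RCLike 𝕜] {E : Type*} [NormedAddCommGroup E]
    [NormedSpace 𝕜 E] [CompleteSpace E]
    {F : Type*} [NormedAddCommGroup F] [NormedSpace 𝕜 F] [CompleteSpace F]
    {n : ℕ} (hn : 2 ≤ n) {p : ℝ} (hp : 0 < p)
    (T : ContinuousMultilinearMap 𝕜 (fun _ : Fin n => E) F)
    (hT : ∃ C, 0 ≤ C ∧ DominatedWith 𝕜 p C ⇑T) :
    ∃ C, 0 ≤ C ∧ SemiIntegralWith 𝕜 p C ⇑T :=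
  hT.imp fun _ ⟨hC, hdom⟩ => ⟨hC, semiIntegral_of_dominated_general hp hdom⟩
end

section
/- Let E, F be Banach spaces, n ≥ 2 and 0 < p < ∞. Every p-semi-integral continuous n-linear map T : E × ⋯ × E → F is of absolutely p-summing type, i.e., Ψ_j^{(n)}(T) is an absolutely p-summing linear operator for every j = 1, …, n. -/
open MeasureTheory

/-!
If `‖x k‖ ≤ 1` for all `k ≠ i`, then every factor of the integrand `∏ k, ‖φ k (x k)‖ ^ p` other
than the `i`-th is at most `1`, so the semi-integral inequality says that the norm of `Ψᵢ(T)(a)` is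
at most `C * (∫ ‖φ i a‖ ^ p ∂μ) ^ (1 / p)`. Summing the `p`-th powers over a finite family of points
`a = x j` moves the sum under the integral, where it is bounded pointwise by
`weakLpNorm 𝕜 p x ^ p`; since `μ` is a probability measure, so is the integral.
-/

section WeakLpNorm

variable {𝕜 : Type*} [RCLike 𝕜] {E : Type*} [NormedAddCommGroup E] [NormedSpace 𝕜 E]
  {p : ℝ} {m : ℕ} {x : Fin m → E}

theorem weakLpNorm_nonneg_s12 : 0 ≤ weakLpNorm 𝕜 p x :=
  Real.iSup_nonneg fun _ => by positivity

theorem rpow_sum_norm_apply_le_weakLpNorm (hp : 0 ≤ p) {φ : StrongDual 𝕜 E} (hφ : ‖φ‖ ≤ 1) :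
    (∑ j, ‖φ (x j)‖ ^ p) ^ (1 / p) ≤ weakLpNorm 𝕜 p x := by
  refine le_ciSup (f := fun ψ : {ψ : E →L[𝕜] 𝕜 // ‖ψ‖ ≤ 1} =>
    (∑ j, ‖ψ.1 (x j)‖ ^ p) ^ (1 / p)) ⟨(∑ j, ‖x j‖ ^ p) ^ (1 / p), ?_⟩ ⟨φ, hφ⟩
  rintro _ ⟨ψ, rfl⟩
  dsimp only
  gcongr with j
  simpa only [one_mul] using ψ.1.le_of_opNorm_le ψ.2 (x j)

theorem sum_rpow_norm_apply_le_weakLpNorm_rpow (hp : 0 < p) {φ : StrongDual 𝕜 E}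
    (hφ : ‖φ‖ ≤ 1) : ∑ j, ‖φ (x j)‖ ^ p ≤ weakLpNorm 𝕜 p x ^ p := by
  rw [← Real.rpow_inv_le_iff_of_pos (by positivity) weakLpNorm_nonneg_s12 hp, ← one_div]
  exact rpow_sum_norm_apply_le_weakLpNorm hp.le hφ

end WeakLpNorm

section RandomFunctional

variable {𝕜 : Type*} [RCLike 𝕜] {E : Type*} [NormedAddCommGroup E] [NormedSpace 𝕜 E]
  {Ω : Type*} [MeasurableSpace Ω] {μ : Measure Ω} {Φ : Ω → StrongDual 𝕜 E} {p : ℝ}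

theorem integrable_rpow_norm_apply [IsFiniteMeasure μ] (hp : 0 ≤ p)
    (hΦ : ∀ᵐ ω ∂μ, ‖Φ ω‖ ≤ 1) {z : E} (hz : AEStronglyMeasurable (fun ω => Φ ω z) μ) :
    Integrable (fun ω => ‖Φ ω z‖ ^ p) μ := by
  refine .of_bound (hz.norm.aemeasurable.pow_const p).aestronglyMeasurable (‖z‖ ^ p) ?_
  filter_upwards [hΦ] with ω hω
  rw [Real.norm_of_nonneg (by positivity)]
  gcongr
  simpa only [one_mul] using (Φ ω).le_of_opNorm_le hω z

theorem sum_integral_rpow_norm_apply_le_weakLpNorm_rpow [IsProbabilityMeasure μ] (hp : 0 < p)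
    (hΦ : ∀ᵐ ω ∂μ, ‖Φ ω‖ ≤ 1) {m : ℕ} {x : Fin m → E}
    (hx : ∀ j, AEStronglyMeasurable (fun ω => Φ ω (x j)) μ) :
    ∑ j, ∫ ω, ‖Φ ω (x j)‖ ^ p ∂μ ≤ weakLpNorm 𝕜 p x ^ p := by
  have hint (j) : Integrable (fun ω => ‖Φ ω (x j)‖ ^ p) μ :=
    integrable_rpow_norm_apply hp.le hΦ (hx j)
  calc ∑ j, ∫ ω, ‖Φ ω (x j)‖ ^ p ∂μ
      = ∫ ω, ∑ j, ‖Φ ω (x j)‖ ^ p ∂μ := (integral_finsetSum _ fun j _ => hint j).symm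
    _ ≤ ∫ _, weakLpNorm 𝕜 p x ^ p ∂μ :=
        integral_mono_ae (integrable_finsetSum _ fun j _ => hint j) (integrable_const _)
          (hΦ.mono fun _ hω => sum_rpow_norm_apply_le_weakLpNorm_rpow hp hω)
    _ = weakLpNorm 𝕜 p x ^ p := by simp

end RandomFunctional

section DualBallProd

variable {𝕜 : Type*} [RCLike 𝕜] {ι : Type*} {E : ι → Type*}
  [∀ i, NormedAddCommGroup (E i)] [∀ i, NormedSpace 𝕜 (E i)]

/-- The product `K` of the closed dual unit balls with their weak-star topologies, spelled as in
`SemiIntegralWith`: membership in a ball is the pointwise bound because `WeakDual` has no norm. -/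
abbrev DualBallProd (𝕜 : Type*) [RCLike 𝕜] {ι : Type*} (E : ι → Type*)
    [∀ i, NormedAddCommGroup (E i)] [∀ i, NormedSpace 𝕜 (E i)] : Type _ :=
  ∀ i, {φ : WeakDual 𝕜 (E i) // ∀ z, ‖φ z‖ ≤ ‖z‖}

namespace DualBallProd

theorem norm_toStrongDual_le_one (φ : DualBallProd 𝕜 E) (i : ι) :
    ‖WeakDual.toStrongDual (φ i).1‖ ≤ 1 :=
  ContinuousLinearMap.opNorm_le_bound _ zero_le_one fun z =>
    ((φ i).2 z).trans_eq (one_mul _).symm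

theorem continuous_apply_apply (i : ι) (z : E i) :
    Continuous fun φ : DualBallProd 𝕜 E => (φ i).1 z :=
  (WeakDual.eval_continuous z).comp (continuous_subtype_val.comp (continuous_apply i))

theorem prod_rpow_norm_apply_le [Fintype ι] {p : ℝ} (hp : 0 ≤ p) (φ : DualBallProd 𝕜 E) {i : ι}
    {x : ∀ k, E k} (hx : ∀ k ≠ i, ‖x k‖ ≤ 1) :
    ∏ k, ‖(φ k).1 (x k)‖ ^ p ≤ ‖(φ i).1 (x i)‖ ^ p := by
  classical
  rw [← Finset.mul_prod_erase Finset.univ _ (Finset.mem_univ i)]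
  refine mul_le_of_le_one_right (by positivity)
    (Finset.prod_le_one (fun k _ => by positivity) fun k hk => ?_)
  exact Real.rpow_le_one (norm_nonneg _)
    (((φ k).2 (x k)).trans (hx k (Finset.ne_of_mem_erase hk))) hp

variable [MeasurableSpace (DualBallProd 𝕜 E)] [OpensMeasurableSpace (DualBallProd 𝕜 E)]
  {μ : Measure (DualBallProd 𝕜 E)} {p : ℝ} {i : ι}

theorem integral_prod_rpow_norm_apply_le [Fintype ι] [IsFiniteMeasure μ] (hp : 0 ≤ p)
    {x : ∀ k, E k} (hx : ∀ k ≠ i, ‖x k‖ ≤ 1) :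
    ∫ φ, ∏ k, ‖(φ k).1 (x k)‖ ^ p ∂μ ≤ ∫ φ, ‖(φ i).1 (x i)‖ ^ p ∂μ :=
  integral_mono_of_nonneg (.of_forall fun _ => by positivity)
    (integrable_rpow_norm_apply hp (.of_forall fun φ => norm_toStrongDual_le_one φ i)
      (continuous_apply_apply i (x i)).measurable.aestronglyMeasurable)
    (.of_forall fun φ => prod_rpow_norm_apply_le hp φ hx)

theorem sum_integral_rpow_norm_apply_le [IsProbabilityMeasure μ] (hp : 0 < p) {m : ℕ}
    (x : Fin m → E i) :
    ∑ j, ∫ φ, ‖(φ i).1 (x j)‖ ^ p ∂μ ≤ weakLpNorm 𝕜 p x ^ p :=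
  sum_integral_rpow_norm_apply_le_weakLpNorm_rpow hp
    (.of_forall fun φ => norm_toStrongDual_le_one φ i)
    fun j => (continuous_apply_apply i (x j)).measurable.aestronglyMeasurable

end DualBallProd

end DualBallProd

section SectionNorm

variable {ι : Type*} [DecidableEq ι] {F : Type*} [SeminormedAddCommGroup F]

/-- The norm of `Ψᵢ(T)(a)`: the supremum of `‖T x‖` over the points `x` with `i`-th coordinate `a`
and all other coordinates in the closed unit balls. It makes sense for an arbitrary map `T`, and
is `0` by convention when the supremum is infinite. -/
noncomputable def sectionNorm {E : ι → Type*} [∀ i, SeminormedAddCommGroup (E i)]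
    (T : (∀ i, E i) → F) (i : ι) (a : E i) : ℝ :=
  ⨆ y : ∀ k : {k // k ≠ i}, {z : E k // ‖z‖ ≤ 1},
    ‖T ((Equiv.piSplitAt i E).symm (a, fun k => (y k).1))‖

section Dependent

variable {E : ι → Type*} [∀ i, SeminormedAddCommGroup (E i)] {T : (∀ i, E i) → F} {i : ι}
  {a : E i}

theorem sectionNorm_nonneg : 0 ≤ sectionNorm T i a :=
  Real.iSup_nonneg fun _ => norm_nonneg _

theorem sectionNorm_le {M : ℝ}
    (h : ∀ x : ∀ k, E k, x i = a → (∀ k ≠ i, ‖x k‖ ≤ 1) → ‖T x‖ ≤ M) :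
    sectionNorm T i a ≤ M := by
  have (k : {k // k ≠ i}) : Nonempty {z : E k // ‖z‖ ≤ 1} := ⟨⟨0, by simp⟩⟩
  refine ciSup_le fun y => h _ (by simp [Equiv.piSplitAt]) fun k hk => ?_
  simpa [Equiv.piSplitAt, hk] using (y ⟨k, hk⟩).2

end Dependent

theorem sectionNorm_eq_iSup_dite {E : Type*} [SeminormedAddCommGroup E] (T : (ι → E) → F) (i : ι)
    (a : E) :
    sectionNorm T i a = ⨆ y : {k // k ≠ i} → {z : E // ‖z‖ ≤ 1},
      ‖T fun k => if h : k = i then a else (y ⟨k, h⟩).1‖ := by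
  refine iSup_congr fun y => congrArg (fun x => ‖T x‖) (funext fun k => ?_)
  simp [Equiv.piSplitAt]

end SectionNorm

section SemiIntegral

variable {𝕜 : Type*} [RCLike 𝕜] {ι : Type*} [Fintype ι] [DecidableEq ι] {E : ι → Type*}
  [∀ i, NormedAddCommGroup (E i)] [∀ i, NormedSpace 𝕜 (E i)]
  {F : Type*} [NormedAddCommGroup F] {p C : ℝ} {T : (∀ i, E i) → F}

theorem sectionNorm_rpow_le_integral [MeasurableSpace (DualBallProd 𝕜 E)]
    [OpensMeasurableSpace (DualBallProd 𝕜 E)] {μ : Measure (DualBallProd 𝕜 E)}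
    [IsFiniteMeasure μ] (hp : 0 < p) (hC : 0 ≤ C)
    (hT : ∀ x, ‖T x‖ ≤ C * (∫ φ, ∏ k, ‖(φ k).1 (x k)‖ ^ p ∂μ) ^ (1 / p)) (i : ι) (a : E i) :
    sectionNorm T i a ^ p ≤ C ^ p * ∫ φ, ‖(φ i).1 a‖ ^ p ∂μ := by
  have hI : 0 ≤ ∫ φ, ‖(φ i).1 a‖ ^ p ∂μ := integral_nonneg fun _ => by positivity
  have hle : sectionNorm T i a ≤ C * (∫ φ, ‖(φ i).1 a‖ ^ p ∂μ) ^ (1 / p) := by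
    refine sectionNorm_le fun x hxi hx => (hT x).trans ?_
    subst hxi
    refine mul_le_mul_of_nonneg_left (Real.rpow_le_rpow ?_ ?_ (by positivity)) hC
    · exact integral_nonneg fun _ => by positivity
    · exact DualBallProd.integral_prod_rpow_norm_apply_le hp.le hx
  calc sectionNorm T i a ^ p
      ≤ (C * (∫ φ, ‖(φ i).1 a‖ ^ p ∂μ) ^ (1 / p)) ^ p :=
        Real.rpow_le_rpow sectionNorm_nonneg hle hp.le
    _ = C ^ p * ∫ φ, ‖(φ i).1 a‖ ^ p ∂μ := by
        rw [Real.mul_rpow hC (by positivity), one_div, Real.rpow_inv_rpow hI hp.ne']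

theorem absSummingType_of_semiIntegral_general (hp : 0 < p) (hC : 0 ≤ C)
    (hT : SemiIntegralWith 𝕜 p C T) (i : ι) {m : ℕ} (x : Fin m → E i) :
    (∑ j, sectionNorm T i (x j) ^ p) ^ (1 / p) ≤ C * weakLpNorm 𝕜 p x := by
  let _ : MeasurableSpace (DualBallProd 𝕜 E) := borel _
  have : BorelSpace (DualBallProd 𝕜 E) := ⟨rfl⟩
  obtain ⟨μ, hμ, -, hT⟩ := hT
  have hW : 0 ≤ weakLpNorm 𝕜 p x := weakLpNorm_nonneg_s12
  have hnonneg : 0 ≤ ∑ j, sectionNorm T i (x j) ^ p :=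
    Finset.sum_nonneg fun _ _ => Real.rpow_nonneg sectionNorm_nonneg p
  rw [one_div, Real.rpow_inv_le_iff_of_pos hnonneg (by positivity) hp]
  calc ∑ j, sectionNorm T i (x j) ^ p
      ≤ ∑ j, C ^ p * ∫ φ, ‖(φ i).1 (x j)‖ ^ p ∂μ :=
        Finset.sum_le_sum fun j _ => sectionNorm_rpow_le_integral hp hC hT i (x j)
    _ = C ^ p * ∑ j, ∫ φ, ‖(φ i).1 (x j)‖ ^ p ∂μ := (Finset.mul_sum _ _ _).symm
    _ ≤ C ^ p * weakLpNorm 𝕜 p x ^ p := by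
        gcongr
        exact DualBallProd.sum_integral_rpow_norm_apply_le hp x
    _ = (C * weakLpNorm 𝕜 p x) ^ p := (Real.mul_rpow hC hW).symm

end SemiIntegral

/-- Every `p`-semi-integral continuous `n`-linear map (`n ≥ 2`) is of
absolutely `p`-summing type: each `Ψⱼ(T)` is an absolutely `p`-summing linear operator (the
norm of `Ψⱼ(T)(x)` being the sup over the product of the closed unit balls of the remaining
coordinates). -/
theorem absSummingType_of_semiIntegral {𝕜 : Type*} [RCLike 𝕜] {E : Type*}
    [NormedAddCommGroup E] [NormedSpace 𝕜 E] [CompleteSpace E]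
    {F : Type*} [NormedAddCommGroup F] [NormedSpace 𝕜 F] [CompleteSpace F]
    {n : ℕ} (hn : 2 ≤ n) {p : ℝ} (hp : 0 < p)
    (T : ContinuousMultilinearMap 𝕜 (fun _ : Fin n => E) F)
    (hT : ∃ C, 0 ≤ C ∧ SemiIntegralWith 𝕜 p C ⇑T) :
    ∀ i : Fin n, ∃ C, 0 ≤ C ∧ ∀ (m : ℕ) (x : Fin m → E),
      (∑ j, (⨆ y : {k : Fin n // k ≠ i} → {z : E // ‖z‖ ≤ 1},
          ‖T (fun k => if h : k = i then x j else (y ⟨k, h⟩).1)‖) ^ p) ^ (1 / p)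
        ≤ C * weakLpNorm 𝕜 p x := by
  obtain ⟨C, hC, hS⟩ := hT
  exact fun i => ⟨C, hC, fun m x => by
    simpa only [sectionNorm_eq_iSup_dite] using
      absSummingType_of_semiIntegral_general hp hC hS i x⟩
end
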